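/- arXiv:1903.06159 — 6 statements merged into one kernel-verified Lean document; each statement's English description precedes it below -/
import Mathlib

section
/- Let α, β, γ, δ, q, u be complex numbers with u² = γδq². Then for every nonzero complex z, Φ⁺(u²/z) = (u⁴/z⁴)·Φ⁻(z) and Φ⁻(u²/z) = (u⁴/z⁴)·Φ⁺(z). In particular, whenever Φ⁻(u²/z) and Φ⁻(z) are nonzero, Φ⁺(u²/z)/Φ⁻(u²/z) = Φ⁻(z)/Φ⁺(z). -/
/-- `Φ⁺(z) = (z−αq)(z−βδq)(z−γq)(z−γδq)`. -/
noncomputable def PhiPlus (α β γ δ q z : ℂ) : ℂ :=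
  (z - α * q) * (z - β * δ * q) * (z - γ * q) * (z - γ * δ * q)

/-- `Φ⁻(z) = (αz−γδq)(βz−γq)(z−δq)(z−q)`. -/
noncomputable def PhiMinus (α β γ δ q z : ℂ) : ℂ :=
  (α * z - γ * δ * q) * (β * z - γ * q) * (z - δ * q) * (z - q)

theorem stmt4 (α β γ δ q u : ℂ) (hu2 : u ^ 2 = γ * δ * q ^ 2) :
    (∀ z : ℂ, z ≠ 0 →
      PhiPlus α β γ δ q (u ^ 2 / z) = u ^ 4 / z ^ 4 * PhiMinus α β γ δ q z ∧
      PhiMinus α β γ δ q (u ^ 2 / z) = u ^ 4 / z ^ 4 * PhiPlus α β γ δ q z) ∧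
    (∀ z : ℂ, z ≠ 0 → PhiMinus α β γ δ q (u ^ 2 / z) ≠ 0 → PhiMinus α β γ δ q z ≠ 0 →
      PhiPlus α β γ δ q (u ^ 2 / z) / PhiMinus α β γ δ q (u ^ 2 / z)
        = PhiMinus α β γ δ q z / PhiPlus α β γ δ q z) := by
  have h4 : u ^ 4 = (γ * δ * q ^ 2) ^ 2 := by rw [← hu2]; ring
  have key : ∀ z : ℂ, z ≠ 0 →
      PhiPlus α β γ δ q (u ^ 2 / z) = u ^ 4 / z ^ 4 * PhiMinus α β γ δ q z ∧
      PhiMinus α β γ δ q (u ^ 2 / z) = u ^ 4 / z ^ 4 * PhiPlus α β γ δ q z := by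
    intro z hz
    rw [h4, hu2]
    unfold PhiPlus PhiMinus
    constructor
    · field_simp
      try ring
    · field_simp
      try ring
  refine ⟨key, ?_⟩
  intro z hz h1 _
  obtain ⟨hp, hm⟩ := key z hz
  rw [hm] at h1
  rw [hp, hm]
  exact mul_div_mul_left _ _ (left_ne_zero_of_mul h1)
end

section
/- Let π_0, …, π_{N−1} be distinct complex numbers and ω(0), …, ω(N−1) nonzero complex numbers. Set Π(z) = ∏_{m=0}^{N−1}(z − π_m) and ρ_x = ω(x)^{-1} ∏_{0≤m≤N−1, m≠x}(π_x − π_m)^{-2}, and define the matrix function m_N(z) = [[Π(z), 0], [Π(z)·Σ_{x=0}^{N−1} ρ_x/(z−π_x), 1/Π(z)]]. Then: (1) the entries m_N^{11}, m_N^{21} are polynomials (in particular the (2,1) entry Π(z)Σρ_x/(z−π_x) has no poles) and m_N^{12} = 0; (2) for each x, the residue (jump) condition holds: the residue of m_N at the simple pole π_x equals lim_{z→π_x} m_N(z)·w(x), where w(x) = [[0, ω(x)],[0, 0]]; equivalently, lim_{z→π_x}(z−π_x)/Π(z) = ω(x)·ρ_x·∏_{m≠x}(π_x−π_m); and (3)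 m_N(z)·diag(z^{-N}, z^{N}) → I as z → ∞. -/
theorem stmt9 (N : ℕ) (hN : 1 ≤ N) (π : Fin N → ℂ) (hπ : Function.Injective π)
    (ω : Fin N → ℂ) (hω : ∀ x, ω x ≠ 0)
    (Pprod : ℂ → ℂ) (hPprod : ∀ z, Pprod z = ∏ m, (z - π m))
    (ρ : Fin N → ℂ)
    (hρ : ∀ x, ρ x = (ω x)⁻¹ * ∏ m ∈ Finset.univ.erase x, ((π x - π m) ^ 2)⁻¹)
    (mN : ℂ → Matrix (Fin 2) (Fin 2) ℂ)
    (hmN : ∀ z, mN z = !![Pprod z, 0; Pprod z * ∑ x, ρ x / (z - π x), (Pprod z)⁻¹]) :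
    -- (1) the (1,1) and (2,1) entries are polynomials and the (1,2) entry vanishes
    ((∃ p : Polynomial ℂ, ∀ z : ℂ, (∀ i, z ≠ π i) →
        Pprod z * (∑ x, ρ x / (z - π x)) = p.eval z) ∧
      (∃ p : Polynomial ℂ, ∀ z : ℂ, Pprod z = p.eval z) ∧
      (∀ z : ℂ, mN z 0 1 = 0)) ∧
    -- (2) the residue (jump) condition, in the equivalent form
    --     lim_{z→π_x} (z−π_x)/Π(z) = ω(x)·ρ_x·∏_{m≠x}(π_x−π_m)
    (∀ x : Fin N,
      Filter.Tendsto (fun z : ℂ => (z - π x) / Pprod z) (nhdsWithin (π x) {π x}ᶜ)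
        (nhds (ω x * ρ x * ∏ m ∈ Finset.univ.erase x, (π x - π m)))) ∧
    -- (3) the asymptotic normalization m_N(z)·diag(z^{-N}, z^N) → I as z → ∞
    Filter.Tendsto (fun z : ℂ => mN z * Matrix.diagonal ![(z ^ N)⁻¹, z ^ N])
      (Bornology.cobounded ℂ) (nhds 1) := by
  have hP0 : Filter.Tendsto (fun z : ℂ => Pprod z * (z ^ N)⁻¹) (Bornology.cobounded ℂ)
      (nhds 1) := by
    have h1 : Filter.Tendsto (fun z : ℂ => ∏ m : Fin N, (1 - π m * z⁻¹))
        (Bornology.cobounded ℂ) (nhds (∏ m : Fin N, (1 - π m * 0))) := by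
      apply tendsto_finsetProd
      intro m _
      exact tendsto_const_nhds.sub (tendsto_const_nhds.mul Filter.tendsto_inv₀_cobounded)
    simp only [mul_zero, sub_zero, Finset.prod_const_one] at h1
    refine h1.congr' ?_
    filter_upwards [Bornology.eventually_ne_cobounded (0 : ℂ)] with z hz
    have h2 : (z ^ N)⁻¹ = ∏ _m : Fin N, z⁻¹ := by simp
    rw [hPprod, h2, ← Finset.prod_mul_distrib]
    refine Finset.prod_congr rfl fun m _ => ?_
    field_simp
  have hS : Filter.Tendsto (fun z : ℂ => ∑ x, ρ x / (z - π x)) (Bornology.cobounded ℂ)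
      (nhds 0) := by
    have h1 : Filter.Tendsto (fun z : ℂ => ∑ x, ρ x / (z - π x)) (Bornology.cobounded ℂ)
        (nhds (∑ x, ρ x * 0)) := by
      apply tendsto_finsetSum
      intro x _
      simp only [div_eq_mul_inv]
      refine tendsto_const_nhds.mul (Filter.tendsto_inv₀_cobounded.comp ?_)
      rw [← tendsto_norm_atTop_iff_cobounded]
      refine Filter.tendsto_atTop_mono (fun z => norm_sub_norm_le z (π x)) ?_
      exact Filter.tendsto_atTop_add_const_right _ (-‖π x‖) tendsto_norm_cobounded_atTop
    simpa using h1
  refine ⟨⟨?_, ?_, ?_⟩, ?_, ?_⟩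
  · refine ⟨∑ x, Polynomial.C (ρ x) *
      ∏ m ∈ Finset.univ.erase x, (Polynomial.X - Polynomial.C (π m)), ?_⟩
    intro z hz
    rw [hPprod, Finset.mul_sum, Polynomial.eval_finsetSum]
    refine Finset.sum_congr rfl fun x _ => ?_
    rw [← Finset.mul_prod_erase Finset.univ _ (Finset.mem_univ x)]
    simp only [Polynomial.eval_mul, Polynomial.eval_C, Polynomial.eval_prod,
      Polynomial.eval_sub, Polynomial.eval_X]
    have := sub_ne_zero.mpr (hz x)
    field_simp
  · refine ⟨∏ m, (Polynomial.X - Polynomial.C (π m)), fun z => ?_⟩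
    simp [hPprod, Polynomial.eval_prod]
  · intro z
    simp [hmN]
  · intro x
    have hne : ∏ m ∈ Finset.univ.erase x, (π x - π m) ≠ 0 := by
      rw [Finset.prod_ne_zero_iff]
      intro m hm
      exact sub_ne_zero.mpr fun h => (Finset.ne_of_mem_erase hm) (hπ h).symm
    have hval : ω x * ρ x * ∏ m ∈ Finset.univ.erase x, (π x - π m)
        = (∏ m ∈ Finset.univ.erase x, (π x - π m))⁻¹ := by
      rw [hρ, Finset.prod_inv_distrib, Finset.prod_pow]
      have := hω x
      field_simp
    rw [hval]
    have hc : Filter.Tendsto (fun z : ℂ => (∏ m ∈ Finset.univ.erase x, (z - π m))⁻¹)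
        (nhdsWithin (π x) {π x}ᶜ) (nhds (∏ m ∈ Finset.univ.erase x, (π x - π m))⁻¹) := by
      refine Filter.Tendsto.inv₀ ?_ hne
      have : Continuous fun z : ℂ => ∏ m ∈ Finset.univ.erase x, (z - π m) := by fun_prop
      exact (this.tendsto (π x)).mono_left nhdsWithin_le_nhds
    refine hc.congr' ?_
    filter_upwards [self_mem_nhdsWithin] with z hz
    have hz' : z - π x ≠ 0 := sub_ne_zero.mpr hz
    rw [hPprod, ← Finset.mul_prod_erase Finset.univ _ (Finset.mem_univ x), div_eq_mul_inv,
      mul_inv, mul_inv_cancel_left₀ hz']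
  · refine tendsto_pi_nhds.mpr fun i => tendsto_pi_nhds.mpr fun j => ?_
    simp only [Matrix.mul_diagonal, hmN]
    fin_cases i <;> fin_cases j
    · simpa using hP0
    · simp
    · have := hP0.mul hS
      simp only [mul_zero] at this
      simpa [mul_right_comm] using this
    · have := hP0.inv₀ one_ne_zero
      simpa [mul_inv, mul_comm] using this
end

section
/- Let q and u be nonzero complex numbers, σ(z) = z + u²/(qz), π_m = σ(q^{-m}) for 0 ≤ m ≤ N−1, and Π(w) = ∏_{m=0}^{N−1}(w − π_m). Then for every nonzero complex z at which both sides are defined, Π(σ(z/q)) / Π(σ(z)) = q^{-N} · (z − q)(z − u² q^{N−1}) / ( (z − u² q^{-1})(z − q^{-N+1}) ); equivalently, Π(σ(z/q)) · (z − u²/q)(z − q^{-N+1}) = q^{-N}(z − q)(z − u² q^{N−1}) · Π(σ(z)). -/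
/-- The map `σ(z) = z + u²/(qz)`. -/
noncomputable def sigmaMap (q u z : ℂ) : ℂ := z + u ^ 2 / (q * z)

theorem sigma_sub (q u z : ℂ) (hq : q ≠ 0) (hz : z ≠ 0) (m : ℕ) :
    sigmaMap q u z - sigmaMap q u ((q ^ m)⁻¹)
      = (z - q ^ (1 - ((m + 1 : ℕ) : ℤ))) * (z - u ^ 2 * q ^ ((m : ℤ) - 1)) * z⁻¹ := by
  have h1 : q ^ (1 - ((m + 1 : ℕ) : ℤ)) = (q ^ m)⁻¹ := by
    rw [← zpow_natCast, ← zpow_neg]; congr 1; push_cast; ring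
  rw [h1, zpow_sub₀ hq, zpow_natCast, zpow_one]
  have := pow_ne_zero m hq
  unfold sigmaMap
  field_simp
  ring

theorem sigma_sub_div (q u z : ℂ) (hq : q ≠ 0) (hz : z ≠ 0) (m : ℕ) :
    sigmaMap q u (z / q) - sigmaMap q u ((q ^ m)⁻¹)
      = q⁻¹ * ((z - q ^ (1 - (m : ℤ))) * (z - u ^ 2 * q ^ (((m + 1 : ℕ) : ℤ) - 1)) * z⁻¹) := by
  have h1 : q ^ (((m + 1 : ℕ) : ℤ) - 1) = q ^ m := by
    rw [← zpow_natCast]; congr 1; push_cast; ring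
  rw [h1, zpow_sub₀ hq, zpow_natCast, zpow_one]
  have := pow_ne_zero m hq
  unfold sigmaMap
  field_simp
  ring

theorem stmt10_mul (q u : ℂ) (hq : q ≠ 0) (N : ℕ) (z : ℂ) (hz : z ≠ 0) :
      (∏ m ∈ Finset.range N, (sigmaMap q u (z / q) - sigmaMap q u ((q ^ m)⁻¹)))
          * ((z - u ^ 2 / q) * (z - q ^ (1 - (N : ℤ))))
        = q ^ (-(N : ℤ)) * ((z - q) * (z - u ^ 2 * q ^ ((N : ℤ) - 1)))
          * ∏ m ∈ Finset.range N, (sigmaMap q u z - sigmaMap q u ((q ^ m)⁻¹)) := by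
  have ha := (Finset.prod_range_succ (fun m : ℕ => z - q ^ (1 - (m : ℤ))) N).symm.trans
    (Finset.prod_range_succ' _ N)
  have hb := (Finset.prod_range_succ (fun m : ℕ => z - u ^ 2 * q ^ ((m : ℤ) - 1)) N).symm.trans
    (Finset.prod_range_succ' _ N)
  have h0 : z - q ^ (1 - ((0 : ℕ) : ℤ)) = z - q := by simp
  have h0' : z - u ^ 2 * q ^ (((0 : ℕ) : ℤ) - 1) = z - u ^ 2 / q := by
    simp [zpow_neg, div_eq_mul_inv]
  have hN : q ^ (-(N : ℤ)) = (q⁻¹) ^ N := by simp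
  simp only [h0] at ha
  simp only [h0'] at hb
  rw [Finset.prod_congr rfl (fun m _ => sigma_sub_div q u z hq hz m),
    Finset.prod_congr rfl (fun m _ => sigma_sub q u z hq hz m), hN]
  simp only [Finset.prod_mul_distrib, Finset.prod_const, Finset.card_range]
  linear_combination (q⁻¹ ^ N * z⁻¹ ^ N * (∏ m ∈ Finset.range N, (z - u ^ 2 * q ^ (((m + 1 : ℕ) : ℤ) - 1))) * (z - u ^ 2 / q)) * ha
    - (q⁻¹ ^ N * z⁻¹ ^ N * (∏ m ∈ Finset.range N, (z - q ^ (1 - ((m + 1 : ℕ) : ℤ)))) * (z - q)) * hb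

theorem stmt10 (q u : ℂ) (hq : q ≠ 0) (hu : u ≠ 0) (N : ℕ) (hN : 1 ≤ N) :
    (∀ z : ℂ, z ≠ 0 →
      (∏ m ∈ Finset.range N, (sigmaMap q u (z / q) - sigmaMap q u ((q ^ m)⁻¹)))
          * ((z - u ^ 2 / q) * (z - q ^ (1 - (N : ℤ))))
        = q ^ (-(N : ℤ)) * ((z - q) * (z - u ^ 2 * q ^ ((N : ℤ) - 1)))
          * ∏ m ∈ Finset.range N, (sigmaMap q u z - sigmaMap q u ((q ^ m)⁻¹))) ∧
    (∀ z : ℂ, z ≠ 0 →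
      (∏ m ∈ Finset.range N, (sigmaMap q u z - sigmaMap q u ((q ^ m)⁻¹))) ≠ 0 →
      z - u ^ 2 / q ≠ 0 → z - q ^ (1 - (N : ℤ)) ≠ 0 →
      (∏ m ∈ Finset.range N, (sigmaMap q u (z / q) - sigmaMap q u ((q ^ m)⁻¹)))
          / (∏ m ∈ Finset.range N, (sigmaMap q u z - sigmaMap q u ((q ^ m)⁻¹)))
        = q ^ (-(N : ℤ)) * ((z - q) * (z - u ^ 2 * q ^ ((N : ℤ) - 1)))
          / ((z - u ^ 2 / q) * (z - q ^ (1 - (N : ℤ))))) := by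
  refine ⟨fun z hz => stmt10_mul q u hq N z hz, fun z hz h1 h2 h3 => ?_⟩
  rw [div_eq_div_iff h1 (mul_ne_zero h2 h3)]
  exact stmt10_mul q u hq N z hz
end

section
/- Let ω be a nonzero complex number and set w = [[0, ω],[0, 0]]. Let T = [[t¹¹, t¹²],[t²¹, −t¹¹]] be a 2×2 complex matrix with (t¹¹)² + t¹²t²¹ = 0 and t¹¹ ≠ 0 (hence t¹², t²¹ ≠ 0). Let m and m′ be 2×2 complex matrices with entries m = [[m¹¹, m¹²],[m²¹, m²²]] such that: det m = 1, T·(m¹¹, m²¹)ᵀ = 0, and T·m − m·w = T·m′·w. Then −Tr( m^{-1} m′ w ) = −1 + ω·(m¹¹)² / t¹². -/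
theorem stmt15 (ω t11 t12 t21 : ℂ) (hω : ω ≠ 0) (ht11 : t11 ≠ 0)
    (hnil : t11 ^ 2 + t12 * t21 = 0)
    (m m' : Matrix (Fin 2) (Fin 2) ℂ) (hdet : m.det = 1)
    (hker : (!![t11, t12; t21, -t11] : Matrix (Fin 2) (Fin 2) ℂ).mulVec ![m 0 0, m 1 0] = 0)
    (heq : (!![t11, t12; t21, -t11] : Matrix (Fin 2) (Fin 2) ℂ) * m
        - m * (!![0, ω; 0, 0] : Matrix (Fin 2) (Fin 2) ℂ)
      = (!![t11, t12; t21, -t11] : Matrix (Fin 2) (Fin 2) ℂ) * m'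
        * (!![0, ω; 0, 0] : Matrix (Fin 2) (Fin 2) ℂ)) :
    -Matrix.trace (m⁻¹ * m' * (!![0, ω; 0, 0] : Matrix (Fin 2) (Fin 2) ℂ))
      = -1 + ω * (m 0 0) ^ 2 / t12 := by
  have h12 : t12 ≠ 0 := by
    rintro rfl
    apply ht11
    simpa using hnil
  have hk := congrFun hker 0
  have he := congrFun (congrFun heq 0) 1
  rw [Matrix.det_fin_two] at hdet
  simp [Matrix.vecMul, Matrix.mulVec, dotProduct, Matrix.mul_apply, Fin.sum_univ_two] at hk he
  have htr : Matrix.trace (m⁻¹ * m' * (!![0, ω; 0, 0] : Matrix (Fin 2) (Fin 2) ℂ))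
      = ω * (m 0 0 * m' 1 0 - m 1 0 * m' 0 0) := by
    rw [Matrix.inv_def, Matrix.adjugate_fin_two, Matrix.det_fin_two, hdet]
    simp [Matrix.trace, Matrix.vecMul, dotProduct, Matrix.mul_apply, Fin.sum_univ_two]
    ring
  rw [htr]
  field_simp
  linear_combination m 0 0 * he - m 0 1 * hk + ω * m' 0 0 * hk - t12 * hdet
end

section
/- Let π_0 < π_1 < … < π_M be distinct real numbers, ω_0, …, ω_M > 0, fix 1 ≤ N ≤ M, and consider the N-point orthogonal polynomial ensemble P(S) = W(S)/Z with W(S) = ∏_{i<j∈S}(π_i−π_j)²∏_{i∈S}ω_i. Set ρ_x = ω_x^{-1} ∏_{0≤m≤N−1, m≠x}(π_x − π_m)^{-2} for 0 ≤ x ≤ N−1. Then the gap probabilities D_k = P(S ⊆ {0,…,k−1}) satisfy D_{N+1} = D_N · ( 1 + ω_N · ∏_{l=0}^{N−1}(π_N − π_l)² · Σ_{m=0}^{N−1} ρ_m/(π_N − π_m)² ); equivalently, D_{N+1} = ω_N · h_N · D_N · ∏_{l=0}^{N−1}(π_N − π_l)², where h_N = ρ_N + Σ_{m=0}^{N−1}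 ρ_m/(π_N − π_m)² and ρ_N = ω_N^{-1}∏_{l=0}^{N−1}(π_N − π_l)^{-2}. -/
theorem aux_insert (π ω : ℕ → ℝ) (W : Finset ℕ → ℝ)
    (hW : ∀ S, W S = (∏ p ∈ (S ×ˢ S).filter (fun p => p.1 < p.2), (π p.1 - π p.2) ^ 2)
        * ∏ i ∈ S, ω i) (T : Finset ℕ) (x : ℕ) (hx : x ∉ T) :
    W (insert x T) = W T * (ω x * ∏ m ∈ T, (π x - π m) ^ 2) := by
  have key : ∏ m ∈ T, (π x - π m) ^ 2 =
      (∏ j ∈ T, if x < j then (π x - π j) ^ 2 else 1) *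
        ∏ i ∈ T, if i < x then (π i - π x) ^ 2 else 1 := by
    rw [← Finset.prod_mul_distrib]
    refine Finset.prod_congr rfl fun m hm => ?_
    have hne : m ≠ x := fun h => hx (h ▸ hm)
    rcases lt_or_gt_of_ne hne with h | h
    · rw [if_neg (by omega), if_pos h]; ring
    · rw [if_pos h, if_neg (by omega)]; ring
  rw [hW, hW, key]
  simp only [Finset.prod_filter, Finset.prod_product, Finset.prod_insert hx,
    Finset.prod_mul_distrib, lt_irrefl, if_false]
  ring

theorem aux_filter (M N : ℕ) (hNM : N ≤ M) :
    ((Finset.range (M + 1)).powersetCard N).filter (fun S => S ⊆ Finset.range (N + 1)) =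
      (Finset.range (N + 1)).image (fun m => (Finset.range (N + 1)).erase m) := by
  ext S
  simp only [Finset.mem_filter, Finset.mem_powersetCard, Finset.mem_image]
  constructor
  · rintro ⟨⟨_, hc⟩, hs⟩
    obtain ⟨a, ha, h⟩ := Finset.exists_eq_insert_iff.2 ⟨hs, by simp [hc]⟩
    exact ⟨a, h ▸ Finset.mem_insert_self _ _, by rw [← h, Finset.erase_insert ha]⟩
  · rintro ⟨m, hm, rfl⟩
    refine ⟨⟨(Finset.erase_subset _ _).trans ?_, ?_⟩, Finset.erase_subset _ _⟩
    · exact Finset.range_subset_range.2 (by omega)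
    · rw [Finset.card_erase_of_mem hm]; simp

theorem aux_filter' (M N : ℕ) (hNM : N ≤ M) :
    ((Finset.range (M + 1)).powersetCard N).filter (fun S => S ⊆ Finset.range N) =
      {Finset.range N} := by
  ext S
  simp only [Finset.mem_filter, Finset.mem_powersetCard, Finset.mem_singleton]
  constructor
  · rintro ⟨⟨_, hc⟩, hs⟩
    exact Finset.eq_of_subset_of_card_le hs (by simp [hc])
  · rintro rfl
    exact ⟨⟨Finset.range_subset_range.2 (by omega), by simp⟩, subset_rfl⟩

theorem stmt17 (M N : ℕ) (hN1 : 1 ≤ N) (hNM : N ≤ M)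
    (π ω : ℕ → ℝ)
    (hπ : ∀ i j, i < j → j ≤ M → π i < π j)
    (hω : ∀ i ≤ M, 0 < ω i)
    (W : Finset ℕ → ℝ)
    (hW : ∀ S, W S = (∏ p ∈ (S ×ˢ S).filter (fun p => p.1 < p.2), (π p.1 - π p.2) ^ 2)
        * ∏ i ∈ S, ω i)
    (Z : ℝ) (hZ : Z = ∑ S ∈ (Finset.range (M + 1)).powersetCard N, W S)
    (D : ℕ → ℝ)
    (hD : ∀ k, D k = (∑ S ∈ ((Finset.range (M + 1)).powersetCard N).filter
        (fun S => S ⊆ Finset.range k), W S) / Z)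
    (ρ : ℕ → ℝ)
    (hρ : ∀ x ≤ N, ρ x = (ω x)⁻¹ * ∏ m ∈ (Finset.range N).erase x, ((π x - π m) ^ 2)⁻¹) :
    D (N + 1) = D N * (1 + ω N * (∏ l ∈ Finset.range N, (π N - π l) ^ 2)
        * ∑ m ∈ Finset.range N, ρ m / (π N - π m) ^ 2) ∧
    D (N + 1) = ω N * (ρ N + ∑ m ∈ Finset.range N, ρ m / (π N - π m) ^ 2) * D N
        * ∏ l ∈ Finset.range N, (π N - π l) ^ 2 := by
  have hne : ∀ i j, i ≤ M → j ≤ M → i ≠ j → π i - π j ≠ 0 := by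
    intro i j hi hj hij
    rcases lt_or_gt_of_ne hij with h | h
    · exact sub_ne_zero.2 (hπ i j h hj).ne
    · exact sub_ne_zero.2 (hπ j i h hi).ne'
  have hP : (∏ l ∈ Finset.range N, (π N - π l) ^ 2) ≠ 0 := by
    refine Finset.prod_ne_zero_iff.2 fun l hl => pow_ne_zero _ ?_
    have := Finset.mem_range.1 hl
    exact hne _ _ hNM (by omega) (by omega)
  have hN : ω N * ρ N * (∏ l ∈ Finset.range N, (π N - π l) ^ 2) = 1 := by
    rw [hρ N le_rfl, Finset.erase_eq_of_notMem (by simp), Finset.prod_inv_distrib]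
    have := (hω N hNM).ne'
    field_simp
  have hterm : ∀ m ∈ Finset.range N, W ((Finset.range (N + 1)).erase m) =
      W (Finset.range N) * (ω N * (∏ l ∈ Finset.range N, (π N - π l) ^ 2) *
        (ρ m / (π N - π m) ^ 2)) := by
    intro m hm
    have hm' := Finset.mem_range.1 hm
    have e1 : (Finset.range (N + 1)).erase m = insert N ((Finset.range N).erase m) := by
      rw [Finset.range_add_one, Finset.erase_insert_of_ne (by omega)]
    have h1 := aux_insert π ω W hW ((Finset.range N).erase m) N (by simp)
    have h2 := aux_insert π ω W hW ((Finset.range N).erase m) m (by simp)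
    rw [Finset.insert_erase hm] at h2
    rw [e1, h1, h2, hρ m hm'.le, Finset.prod_inv_distrib,
      ← Finset.mul_prod_erase (Finset.range N) (fun l => (π N - π l) ^ 2) hm]
    have a1 := (hω m (by omega)).ne'
    have a2 := hne N m hNM (by omega) (by omega)
    have a3 : (∏ l ∈ (Finset.range N).erase m, (π m - π l) ^ 2) ≠ 0 := by
      refine Finset.prod_ne_zero_iff.2 fun l hl => pow_ne_zero _ ?_
      have h := Finset.mem_erase.1 hl
      have := Finset.mem_range.1 h.2
      exact hne _ _ (by omega) (by omega) h.1.symm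
    field_simp
  have hmain : D (N + 1) = D N * (1 + ω N * (∏ l ∈ Finset.range N, (π N - π l) ^ 2)
        * ∑ m ∈ Finset.range N, ρ m / (π N - π m) ^ 2) := by
    rw [hD, hD, aux_filter M N hNM, aux_filter' M N hNM, Finset.sum_singleton,
      Finset.sum_image (Finset.erase_injOn _), Finset.sum_range_succ,
      Finset.sum_congr rfl hterm, ← Finset.mul_sum, ← Finset.mul_sum]
    have : (Finset.range (N + 1)).erase N = Finset.range N := by
      rw [Finset.range_add_one, Finset.erase_insert (by simp)]
    rw [this]
    ring
  refine ⟨hmain, ?_⟩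
  rw [hmain]
  linear_combination (-D N) * hN
end

section
/- Let u, z₂, z₄ be complex numbers and x, y complex variables, and define f = (x − u(y−1) − z₂(y+1)) / (u²(y+1) − z₂(xy + u(y−1))) and g = (u²(y+1) − z₄(xy + u(y−1))) / (x − u(y−1) − z₄(y+1)). If u(y² + 1) = xy (i.e. the point (x,y) lies on the curve C₀) and all four denominators/numerators involved are nonzero, then f·g = 1. In other words, this change of variables maps the curve C₀ = V(u(y²+1) − xy) into the curve V(fg − 1). -/
theorem stmt18 (u z₂ z₄ x y : ℂ)
    (hcurve : u * (y ^ 2 + 1) = x * y)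
    (hfn : x - u * (y - 1) - z₂ * (y + 1) ≠ 0)
    (hfd : u ^ 2 * (y + 1) - z₂ * (x * y + u * (y - 1)) ≠ 0)
    (hgn : u ^ 2 * (y + 1) - z₄ * (x * y + u * (y - 1)) ≠ 0)
    (hgd : x - u * (y - 1) - z₄ * (y + 1) ≠ 0) :
    ((x - u * (y - 1) - z₂ * (y + 1)) / (u ^ 2 * (y + 1) - z₂ * (x * y + u * (y - 1))))
      * ((u ^ 2 * (y + 1) - z₄ * (x * y + u * (y - 1))) / (x - u * (y - 1) - z₄ * (y + 1)))
      = 1 := by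
  have key : ∀ z : ℂ, u ^ 2 * (y + 1) - z * (x * y + u * (y - 1))
      = u * y * (x - u * (y - 1) - z * (y + 1)) := by
    intro z
    linear_combination (u + z) * hcurve
  rw [div_mul_div_comm, div_eq_one_iff_eq (mul_ne_zero hfd hgd), key z₂, key z₄]
  ring
end
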